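/- arXiv:1901.02179 — 2 statements merged into one kernel-verified Lean document; each statement's English description precedes it below -/
import Mathlib

section
/- (Lemma 5.1(ii)) For every p ∈ {1,…,m}: { ⟨Q^p, X⟩ : X ∈ Γ^A, ⟨Q^i, X⟩ = 0 (i = 1,…,p−1), ⟨H^0, X⟩ = 0 } = { f̄_p(0, w) : w ∈ S̃_{p−1} }. In particular ζ(Γ^A ∩ J_{p−1}, Q^p, 0) := inf{ ⟨Q^p, X⟩ : X ∈ Γ^A ∩ J_{p−1}, ⟨H^0, X⟩ = 0 } equals inf{ f̄_p(0, w) : w ∈ S̃_{p−1} } (infima in the extended reals). -/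
open MvPolynomial

noncomputable section

open scoped Classical

variable {n : ℕ}

/-- The vector `u^A(x)` of monomials `x^α` for `α ∈ A`. -/
def uA (A : Finset (Fin (n+1) →₀ ℕ)) (x : Fin (n+1) → ℝ) (a : A) : ℝ :=
  ∏ i, x i ^ (a : Fin (n+1) →₀ ℕ) i

/-- The rank-one moment matrix `u^A(x) u^A(x)ᵀ`. -/
def momMat (A : Finset (Fin (n+1) →₀ ℕ)) (x : Fin (n+1) → ℝ) : Matrix A A ℝ :=
  fun a b => uA A x a * uA A x b

/-- The cone `Γ^A = { u^A(x) u^A(x)ᵀ : x ∈ ℝ^{1+n}, x ≥ 0 }`. -/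
def GammaA (A : Finset (Fin (n+1) →₀ ℕ)) : Set (Matrix A A ℝ) :=
  { X | ∃ x : Fin (n+1) → ℝ, (∀ i, 0 ≤ x i) ∧ X = momMat A x }

/-- The extended completely positive cone `CPP^A = conv Γ^A`. -/
def CPPA (A : Finset (Fin (n+1) →₀ ℕ)) : Set (Matrix A A ℝ) :=
  convexHull ℝ (GammaA A)

/-- The trace inner product `⟨P, X⟩ = Σ_{a,b} P_{ab} X_{ab}`. -/
def ip {A : Finset (Fin (n+1) →₀ ℕ)} (P X : Matrix A A ℝ) : ℝ :=
  ∑ a : A, ∑ b : A, P a b * X a b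

/-- The matrix `H^0` whose `(α^ω, α^ω)` entry is `1` and all other entries are `0`. -/
def H0mat (A : Finset (Fin (n+1) →₀ ℕ)) (ω : ℕ) : Matrix A A ℝ :=
  fun a b =>
    if (a : Fin (n+1) →₀ ℕ) = Finsupp.single 0 ω ∧ (b : Fin (n+1) →₀ ℕ) = Finsupp.single 0 ω
    then 1 else 0

/-- `J_p = { X ∈ CPP^A : ⟨Q^i, X⟩ = 0 (i = 1,…,p) }`. -/
def Jset (A : Finset (Fin (n+1) →₀ ℕ)) (Q : ℕ → Matrix A A ℝ) (p : ℕ) :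
    Set (Matrix A A ℝ) :=
  { X ∈ CPPA A | ∀ i, 1 ≤ i → i ≤ p → ip (Q i) X = 0 }

/-- `S̄_p = { x ∈ ℝ^{1+n}_+ : f̄_i(x) = 0 (i = 1,…,p) }`. -/
def Sbar (fb : ℕ → MvPolynomial (Fin (n+1)) ℝ) (p : ℕ) : Set (Fin (n+1) → ℝ) :=
  { x | (∀ j, 0 ≤ x j) ∧ ∀ i, 1 ≤ i → i ≤ p → eval x (fb i) = 0 }

/-- `S̃_p = { w ∈ ℝ^n_+ : f̄_i(0, w) = 0 (i = 1,…,p) }`. -/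
def Stilde (fb : ℕ → MvPolynomial (Fin (n+1)) ℝ) (p : ℕ) : Set (Fin n → ℝ) :=
  { w | (∀ j, 0 ≤ w j) ∧ ∀ i, 1 ≤ i → i ≤ p → eval (Fin.cons 0 w) (fb i) = 0 }

/-- `S_p = { w ∈ ℝ^n_+ : f_i(w) = 0 (i = 1,…,p) }`. -/
def Sset (f : ℕ → MvPolynomial (Fin n) ℝ) (p : ℕ) : Set (Fin n → ℝ) :=
  { w | (∀ j, 0 ≤ w j) ∧ ∀ i, 1 ≤ i → i ≤ p → eval w (f i) = 0 }

/-- Infimum of a set of reals, taken in the extended reals. -/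
def erInf (s : Set ℝ) : EReal := sInf ((fun r : ℝ => (r : EReal)) '' s)

/-- `F` is a face of the convex set `C`. -/
def IsFace {V : Type*} [AddCommGroup V] [Module ℝ V] (C F : Set V) : Prop :=
  F ⊆ C ∧ Convex ℝ F ∧
    ∀ y ∈ C, ∀ z ∈ C, ∀ t : ℝ, 0 < t → t < 1 → (1 - t) • y + t • z ∈ F → y ∈ F ∧ z ∈ F

/-!
Since `⟨H^0, u^A(x) u^A(x)ᵀ⟩ = x_0^{2ω}`, the equation `⟨H^0, X⟩ = 0` cuts out of `Γ^A` exactly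
the moment matrices of the points `x = (0, w)` with `w ≥ 0`. On these, `⟨Q^i, X⟩` is `f̄_i(0, w)`,
so the remaining constraints on `X` are the equations of `S̃_p`. Imposing them by intersecting with
`J_p` makes no difference, because `Γ^A ⊆ CPP^A`.
-/

section MomentMatrix

variable {A : Finset (Fin (n + 1) →₀ ℕ)} {ω : ℕ}

theorem uA_single (x : Fin (n + 1) → ℝ) {i : Fin (n + 1)} {k : ℕ} (hk : Finsupp.single i k ∈ A) :
    uA A x ⟨Finsupp.single i k, hk⟩ = x i ^ k := by
  simp [uA, Finsupp.single_apply, pow_ite]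

theorem ip_H0mat (hAtop : Finsupp.single 0 ω ∈ A) (X : Matrix A A ℝ) :
    ip (H0mat A ω) X = X ⟨Finsupp.single 0 ω, hAtop⟩ ⟨Finsupp.single 0 ω, hAtop⟩ := by
  have hentry (a b : A) : H0mat A ω a b =
      if a = ⟨Finsupp.single 0 ω, hAtop⟩ then
        if b = ⟨Finsupp.single 0 ω, hAtop⟩ then 1 else 0
      else 0 := by
    simp only [H0mat, Subtype.ext_iff, ite_and]
  simp [ip, hentry]

theorem ip_H0mat_momMat (hAtop : Finsupp.single 0 ω ∈ A) (x : Fin (n + 1) → ℝ) :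
    ip (H0mat A ω) (momMat A x) = x 0 ^ ω * x 0 ^ ω := by
  rw [ip_H0mat hAtop, momMat, uA_single]

theorem ip_H0mat_momMat_eq_zero_iff (hω : ω ≠ 0) (hAtop : Finsupp.single 0 ω ∈ A)
    (x : Fin (n + 1) → ℝ) : ip (H0mat A ω) (momMat A x) = 0 ↔ x 0 = 0 := by
  rw [ip_H0mat_momMat hAtop, mul_self_eq_zero, pow_eq_zero_iff hω]

theorem mem_GammaA_and_ip_H0mat_eq_zero_iff (hω : ω ≠ 0) (hAtop : Finsupp.single 0 ω ∈ A)
    {X : Matrix A A ℝ} :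
    X ∈ GammaA A ∧ ip (H0mat A ω) X = 0 ↔
      ∃ w : Fin n → ℝ, (∀ j, 0 ≤ w j) ∧ momMat A (Fin.cons 0 w) = X := by
  constructor
  · rintro ⟨⟨x, hx, rfl⟩, hX⟩
    have hx₀ : x 0 = 0 := (ip_H0mat_momMat_eq_zero_iff hω hAtop x).1 hX
    refine ⟨Fin.tail x, fun j => hx j.succ, ?_⟩
    rw [← hx₀, Fin.cons_self_tail]
  · rintro ⟨w, hw, rfl⟩
    refine ⟨⟨Fin.cons 0 w, ?_, rfl⟩, (ip_H0mat_momMat_eq_zero_iff hω hAtop _).2 rfl⟩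
    exact Fin.cases le_rfl hw

theorem GammaA_inter_Jset (Q : ℕ → Matrix A A ℝ) (p : ℕ) :
    GammaA A ∩ Jset A Q p = {X ∈ GammaA A | ∀ i, 1 ≤ i → i ≤ p → ip (Q i) X = 0} := by
  ext X
  exact and_congr_right fun hX => and_iff_right (subset_convexHull ℝ _ hX)

theorem momMat_cons_zero_image_Stilde (hω : ω ≠ 0) (hAtop : Finsupp.single 0 ω ∈ A)
    {fb : ℕ → MvPolynomial (Fin (n + 1)) ℝ} {Q : ℕ → Matrix A A ℝ} {p : ℕ}
    (hQ : ∀ i, 1 ≤ i → i ≤ p → ∀ x, eval x (fb i) = ip (Q i) (momMat A x)) :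
    (fun w => momMat A (Fin.cons 0 w)) '' Stilde fb p =
      {X ∈ GammaA A ∩ Jset A Q p | ip (H0mat A ω) X = 0} := by
  have hStilde (w : Fin n → ℝ) : w ∈ Stilde fb p ↔
      (∀ j, 0 ≤ w j) ∧ ∀ i, 1 ≤ i → i ≤ p → ip (Q i) (momMat A (Fin.cons 0 w)) = 0 :=
    and_congr_right fun _ => forall₃_congr fun i hi hip => by rw [hQ i hi hip]
  ext X
  rw [GammaA_inter_Jset, Set.mem_ofPred_eq, Set.mem_ofPred_eq, and_right_comm,
    mem_GammaA_and_ip_H0mat_eq_zero_iff hω hAtop]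
  constructor
  · rintro ⟨w, hw, rfl⟩
    exact ⟨⟨w, ((hStilde w).1 hw).1, rfl⟩, ((hStilde w).1 hw).2⟩
  · rintro ⟨⟨w, hw, rfl⟩, hX⟩
    exact ⟨w, (hStilde w).2 ⟨hw, hX⟩, rfl⟩

theorem stmt10_general (hω : ω ≠ 0) (hAtop : Finsupp.single 0 ω ∈ A)
    {fb : ℕ → MvPolynomial (Fin (n + 1)) ℝ} {Q : ℕ → Matrix A A ℝ} {p : ℕ}
    (hQ : ∀ i, 1 ≤ i → i ≤ p → ∀ x, eval x (fb i) = ip (Q i) (momMat A x))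
    {g : MvPolynomial (Fin (n + 1)) ℝ} {P : Matrix A A ℝ}
    (hP : ∀ x, eval x g = ip P (momMat A x)) :
    {y : ℝ | ∃ X ∈ GammaA A, (∀ i, 1 ≤ i → i ≤ p → ip (Q i) X = 0) ∧
          ip (H0mat A ω) X = 0 ∧ y = ip P X} =
        {y : ℝ | ∃ w ∈ Stilde fb p, y = eval (Fin.cons 0 w) g} ∧
      erInf {y : ℝ | ∃ X ∈ GammaA A ∩ Jset A Q p, ip (H0mat A ω) X = 0 ∧ y = ip P X} =
        erInf {y : ℝ | ∃ w ∈ Stilde fb p, y = eval (Fin.cons 0 w) g} := by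
  have hvalues : {y : ℝ | ∃ X ∈ GammaA A ∩ Jset A Q p, ip (H0mat A ω) X = 0 ∧ y = ip P X} =
      {y : ℝ | ∃ w ∈ Stilde fb p, y = eval (Fin.cons 0 w) g} := by
    ext y
    calc (∃ X ∈ GammaA A ∩ Jset A Q p, ip (H0mat A ω) X = 0 ∧ y = ip P X)
      _ ↔ ∃ X ∈ {X ∈ GammaA A ∩ Jset A Q p | ip (H0mat A ω) X = 0}, y = ip P X := by
          simp only [Set.mem_ofPred_eq, and_assoc]
      _ ↔ ∃ w ∈ Stilde fb p, y = ip P (momMat A (Fin.cons 0 w)) := by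
          rw [← momMat_cons_zero_image_Stilde hω hAtop hQ, Set.exists_mem_image]
      _ ↔ ∃ w ∈ Stilde fb p, y = eval (Fin.cons 0 w) g := by
          simp only [hP]
  refine ⟨?_, congrArg erInf hvalues⟩
  rw [← hvalues, GammaA_inter_Jset]
  simp only [Set.mem_ofPred_eq, and_assoc]

end MomentMatrix

theorem stmt10
    (n ω m : ℕ) (hn : 0 < n) (hω : 0 < ω) (hm : 0 < m)
    (A : Finset (Fin (n+1) →₀ ℕ)) (hA : A.Nonempty)
    (hAdeg : ∀ α ∈ A, ∑ i, α i = ω)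
    (hAtop : Finsupp.single (0 : Fin (n+1)) ω ∈ A)
    (f : ℕ → MvPolynomial (Fin n) ℝ)
    (fb : ℕ → MvPolynomial (Fin (n+1)) ℝ)
    (hfdeg : ∀ i ≤ m, (f i).totalDegree ≤ 2 * ω)
    (hfbhom : ∀ i ≤ m, (fb i).IsHomogeneous (2 * ω))
    (hfb1 : ∀ i ≤ m, ∀ w : Fin n → ℝ, eval (Fin.cons 1 w) (fb i) = eval w (f i))
    (Q : ℕ → Matrix A A ℝ)
    (hQsymm : ∀ i ≤ m, (Q i).IsSymm)
    (hQrep : ∀ i ≤ m, ∀ x : Fin (n+1) → ℝ, eval x (fb i) = ip (Q i) (momMat A x))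
    :
    ∀ p, 1 ≤ p → p ≤ m →
      ({ y : ℝ | ∃ X ∈ GammaA A, (∀ i, 1 ≤ i → i < p → ip (Q i) X = 0) ∧
            ip (H0mat A ω) X = 0 ∧ y = ip (Q p) X }
          = { y : ℝ | ∃ w ∈ Stilde fb (p - 1), y = eval (Fin.cons 0 w) (fb p) }) ∧
      erInf { y : ℝ | ∃ X ∈ GammaA A ∩ Jset A Q (p - 1),
            ip (H0mat A ω) X = 0 ∧ y = ip (Q p) X }
        = erInf { y : ℝ | ∃ w ∈ Stilde fb (p - 1), y = eval (Fin.cons 0 w) (fb p) } := by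
  intro p hp hpm
  simpa only [Nat.le_sub_one_iff_lt hp] using stmt10_general hω.ne' hAtop (p := p - 1)
    (fun i _ hi => hQrep i (by omega)) (hQrep p hpm)
end
end

section
/- (Theorem 5.1(ii)) Let p ∈ {1,…,m}. Assume that J_{p−1} is a face of CPP^A, that f_p(w) ≥ 0 for every w ∈ S_{p−1}, and that f̄_p(0, w) ≥ 0 for every w ∈ S̃_{p−1}. Then J_p is a face of J_{p−1} and a face of CPP^A. -/
open MvPolynomial

noncomputable section

open scoped Classical

variable {n : ℕ}

/-!
Points of a face `F` of `conv s` are convex combinations of points of `s ∩ F`, so a linear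
functional that is nonnegative on `s ∩ F` is nonnegative on all of `F`, and its zero set cuts out a
face of `F`. For `s = Γ^A`, `F = J_{p-1}` and the functional `⟨Q^p, ·⟩`, this reduces the claim to
`f̄_p ≥ 0` on the points `x ≥ 0` with `f̄_1(x) = ⋯ = f̄_{p-1}(x) = 0`. If `x_0 = 0`, such a point is
`(0, w)` with `w ∈ S̃_{p-1}`; if `x_0 > 0`, homogeneity rescales it to `(1, w)` with `w ∈ S_{p-1}`.
-/

section Extreme

variable {𝕜 E : Type*} [Semiring 𝕜] [PartialOrder 𝕜] [AddCommMonoid E] [Module 𝕜 E]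

theorem subset_convexHull_inter_of_isExtreme [IsOrderedRing 𝕜] {s F : Set E}
    (hF : IsExtreme 𝕜 (convexHull 𝕜 s) F) : F ⊆ convexHull 𝕜 (s ∩ F) := by
  let T : Set E := {x ∈ convexHull 𝕜 s | x ∈ F → x ∈ convexHull 𝕜 (s ∩ F)}
  have hsT : s ⊆ T := fun x hx =>
    ⟨subset_convexHull 𝕜 s hx, fun hxF => subset_convexHull 𝕜 _ ⟨hx, hxF⟩⟩
  have hT : Convex 𝕜 T := by
    refine convex_iff_openSegment_subset.mpr fun x hx y hy z hz => ⟨?_, fun hzF => ?_⟩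
    · exact (convex_convexHull 𝕜 s).openSegment_subset hx.1 hy.1 hz
    · have hxF : x ∈ F := hF.left_mem_of_mem_openSegment hx.1 hy.1 hzF hz
      have hyF : y ∈ F := hF.right_mem_of_mem_openSegment hx.1 hy.1 hzF hz
      exact (convex_convexHull 𝕜 _).openSegment_subset (hx.2 hxF) (hy.2 hyF) hz
  exact fun x hx => (convexHull_min hsT hT (hF.subset hx)).2 hx

theorem isExtreme_sep_eq_zero [IsStrictOrderedRing 𝕜] {C : Set E} (φ : E →ₗ[𝕜] 𝕜)
    (hφ : ∀ x ∈ C, 0 ≤ φ x) : IsExtreme 𝕜 C {x ∈ C | φ x = 0} := by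
  refine ⟨Set.sep_subset _ _, ?_⟩
  rintro x hx y hy _ ⟨-, hz⟩ ⟨a, b, ha, hb, -, rfl⟩
  have hsum : a * φ x + b * φ y = 0 := by
    simpa only [map_add, map_smul, smul_eq_mul] using hz
  have hax : a * φ x = 0 := ((add_eq_zero_iff_of_nonneg (mul_nonneg ha.le (hφ x hx))
    (mul_nonneg hb.le (hφ y hy))).mp hsum).1
  refine ⟨hx, ((hφ x hx).eq_or_lt.resolve_right fun hpos => ?_).symm⟩
  exact (mul_pos ha hpos).ne' hax

end Extreme

section Face

variable {V : Type*} [AddCommGroup V] [Module ℝ V]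

theorem isFace_iff_isExtreme_and_convex {C F : Set V} :
    IsFace C F ↔ IsExtreme ℝ C F ∧ Convex ℝ F := by
  constructor
  · rintro ⟨hsub, hconv, hmem⟩
    refine ⟨⟨hsub, ?_⟩, hconv⟩
    rintro x hx y hy _ hz ⟨a, b, ha, hb, hab, rfl⟩
    obtain rfl : a = 1 - b := eq_sub_of_add_eq hab
    exact (hmem x hx y hy b hb (sub_pos.mp ha) hz).1
  · rintro ⟨hext, hconv⟩
    refine ⟨hext.subset, hconv, fun y hy z hz t ht0 ht1 hmem => ?_⟩
    have hseg : (1 - t) • y + t • z ∈ openSegment ℝ y z :=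
      ⟨1 - t, t, sub_pos.mpr ht1, ht0, sub_add_cancel 1 t, rfl⟩
    exact ⟨hext.left_mem_of_mem_openSegment hy hz hmem hseg,
      hext.right_mem_of_mem_openSegment hy hz hmem hseg⟩

theorem IsFace.trans {C F G : Set V} (hF : IsFace C F) (hG : IsFace F G) : IsFace C G := by
  rw [isFace_iff_isExtreme_and_convex] at *
  exact ⟨hF.1.trans hG.1, hG.2⟩

theorem IsFace.sep_eq_zero_of_nonneg_on_generators {s F : Set V}
    (hF : IsFace (convexHull ℝ s) F) (φ : V →ₗ[ℝ] ℝ) (hφ : ∀ x ∈ s ∩ F, 0 ≤ φ x) :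
    IsFace F {x ∈ F | φ x = 0} := by
  obtain ⟨hext, hconv⟩ := isFace_iff_isExtreme_and_convex.mp hF
  have hφF : ∀ x ∈ F, 0 ≤ φ x := fun x hx =>
    convexHull_min hφ (convex_halfSpace_ge φ.isLinear 0)
      (subset_convexHull_inter_of_isExtreme hext hx)
  exact isFace_iff_isExtreme_and_convex.mpr
    ⟨isExtreme_sep_eq_zero φ hφF, hconv.inter (convex_hyperplane φ.isLinear 0)⟩

end Face

section Homogeneous

theorem eval_smul_of_isHomogeneous {σ R : Type*} [CommSemiring R] {q : MvPolynomial σ R} {k : ℕ}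
    (hq : q.IsHomogeneous k) (c : R) (x : σ → R) : eval (c • x) q = c ^ k * eval x q := by
  rw [eval_eq, eval_eq, Finset.mul_sum]
  refine Finset.sum_congr rfl fun d hd => ?_
  have hdeg : ∑ i ∈ d.support, d i = k := by
    simpa [Finsupp.weight_apply, Finsupp.sum] using hq (mem_support_iff.mp hd)
  simp only [Pi.smul_apply, smul_eq_mul, mul_pow, Finset.prod_mul_distrib,
    Finset.prod_pow_eq_pow_sum, hdeg]
  ring

theorem eval_eq_pow_mul_eval_cons_one {K : Type*} [Field K] {q : MvPolynomial (Fin (n + 1)) K}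
    {k : ℕ} (hq : q.IsHomogeneous k) {x : Fin (n + 1) → K} (hx : x 0 ≠ 0) :
    eval x q = x 0 ^ k * eval (Fin.cons 1 ((x 0)⁻¹ • Fin.tail x)) q := by
  have hscale : x = x 0 • (Fin.cons 1 ((x 0)⁻¹ • Fin.tail x) : Fin (n + 1) → K) := by
    funext i
    cases i using Fin.cases <;> simp [Fin.tail, hx]
  rw [← eval_smul_of_isHomogeneous hq, ← hscale]

theorem cons_zero_tail {α : Type*} [Zero α] {x : Fin (n + 1) → α} (hx : x 0 = 0) :
    Fin.cons 0 (Fin.tail x) = x := by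
  conv_rhs => rw [← Fin.cons_self_tail x, hx]

variable {f : ℕ → MvPolynomial (Fin n) ℝ} {fb : ℕ → MvPolynomial (Fin (n + 1)) ℝ} {d : ℕ → ℕ}
  {p : ℕ} {x : Fin (n + 1) → ℝ}

theorem tail_mem_Stilde (hx : x ∈ Sbar fb p) (hx0 : x 0 = 0) : Fin.tail x ∈ Stilde fb p := by
  refine ⟨fun j => hx.1 j.succ, fun i hi1 hip => ?_⟩
  rw [cons_zero_tail hx0]
  exact hx.2 i hi1 hip

theorem inv_smul_tail_mem_Sset (hhom : ∀ i ∈ Set.Icc 1 p, (fb i).IsHomogeneous (d i))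
    (hone : ∀ i ∈ Set.Icc 1 p, ∀ w, eval (Fin.cons 1 w) (fb i) = eval w (f i))
    (hx : x ∈ Sbar fb p) (hx0 : 0 < x 0) : (x 0)⁻¹ • Fin.tail x ∈ Sset f p := by
  refine ⟨fun j => mul_nonneg (inv_nonneg.mpr hx0.le) (hx.1 j.succ), fun i hi1 hip => ?_⟩
  have hzero := hx.2 i hi1 hip
  rw [eval_eq_pow_mul_eval_cons_one (hhom i ⟨hi1, hip⟩) hx0.ne', hone i ⟨hi1, hip⟩] at hzero
  exact (mul_eq_zero.mp hzero).resolve_left (pow_pos hx0 _).ne'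

theorem eval_nonneg_of_mem_Sbar (hhom : ∀ i ∈ Set.Icc 1 (p + 1), (fb i).IsHomogeneous (d i))
    (hone : ∀ i ∈ Set.Icc 1 (p + 1), ∀ w, eval (Fin.cons 1 w) (fb i) = eval w (f i))
    (hpos : ∀ w ∈ Sset f p, 0 ≤ eval w (f (p + 1)))
    (hpos_infty : ∀ w ∈ Stilde fb p, 0 ≤ eval (Fin.cons 0 w) (fb (p + 1)))
    (hx : x ∈ Sbar fb p) : 0 ≤ eval x (fb (p + 1)) := by
  rcases (hx.1 0).eq_or_lt with hx0 | hx0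
  · simpa only [cons_zero_tail hx0.symm] using hpos_infty _ (tail_mem_Stilde hx hx0.symm)
  · have hlast : p + 1 ∈ Set.Icc 1 (p + 1) := ⟨by lia, le_rfl⟩
    have hIcc : Set.Icc 1 p ⊆ Set.Icc 1 (p + 1) := Set.Icc_subset_Icc_right p.le_succ
    rw [eval_eq_pow_mul_eval_cons_one (hhom _ hlast) hx0.ne', hone _ hlast]
    refine mul_nonneg (pow_nonneg hx0.le _) (hpos _ ?_)
    exact inv_smul_tail_mem_Sset (fun i hi => hhom i (hIcc hi))
      (fun i hi => hone i (hIcc hi)) hx hx0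

end Homogeneous

section Moment

variable {A : Finset (Fin (n + 1) →₀ ℕ)}

theorem isLinearMap_ip (P : Matrix A A ℝ) : IsLinearMap ℝ (ip P) where
  map_add X Y := by simp only [ip, Matrix.add_apply, mul_add, Finset.sum_add_distrib]
  map_smul c X := by
    simp only [ip, Matrix.smul_apply, smul_eq_mul, Finset.mul_sum, mul_left_comm]

theorem Jset_succ (Q : ℕ → Matrix A A ℝ) (p : ℕ) :
    Jset A Q (p + 1) = {X ∈ Jset A Q p | ip (Q (p + 1)) X = 0} := by
  ext X
  constructor
  · rintro ⟨hX, hzero⟩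
    exact ⟨⟨hX, fun i hi1 hip => hzero i hi1 (hip.trans p.le_succ)⟩, hzero _ (by lia) le_rfl⟩
  · rintro ⟨⟨hX, hzero⟩, hlast⟩
    refine ⟨hX, fun i hi1 hip => ?_⟩
    rcases Nat.le_succ_iff.mp hip with hip | rfl
    exacts [hzero i hi1 hip, hlast]

theorem mem_Sbar_of_momMat_mem_Jset {fb : ℕ → MvPolynomial (Fin (n + 1)) ℝ}
    {Q : ℕ → Matrix A A ℝ} {p : ℕ} {x : Fin (n + 1) → ℝ}
    (hQ : ∀ i ∈ Set.Icc 1 p, eval x (fb i) = ip (Q i) (momMat A x))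
    (hx : ∀ j, 0 ≤ x j) (hJ : momMat A x ∈ Jset A Q p) : x ∈ Sbar fb p :=
  ⟨hx, fun i hi1 hip => (hQ i ⟨hi1, hip⟩).trans (hJ.2 i hi1 hip)⟩

end Moment

theorem stmt14_general {A : Finset (Fin (n + 1) →₀ ℕ)} {f : ℕ → MvPolynomial (Fin n) ℝ}
    {fb : ℕ → MvPolynomial (Fin (n + 1)) ℝ} {d : ℕ → ℕ} {Q : ℕ → Matrix A A ℝ} {p : ℕ}
    (hhom : ∀ i ∈ Set.Icc 1 (p + 1), (fb i).IsHomogeneous (d i))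
    (hone : ∀ i ∈ Set.Icc 1 (p + 1), ∀ w, eval (Fin.cons 1 w) (fb i) = eval w (f i))
    (hQ : ∀ i ∈ Set.Icc 1 (p + 1), ∀ x, eval x (fb i) = ip (Q i) (momMat A x))
    (hface : IsFace (CPPA A) (Jset A Q p))
    (hpos : ∀ w ∈ Sset f p, 0 ≤ eval w (f (p + 1)))
    (hpos_infty : ∀ w ∈ Stilde fb p, 0 ≤ eval (Fin.cons 0 w) (fb (p + 1))) :
    IsFace (Jset A Q p) (Jset A Q (p + 1)) ∧ IsFace (CPPA A) (Jset A Q (p + 1)) := by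
  have hgen : ∀ X ∈ GammaA A ∩ Jset A Q p, 0 ≤ ip (Q (p + 1)) X := by
    rintro _ ⟨⟨x, hx, rfl⟩, hJ⟩
    rw [← hQ (p + 1) ⟨by lia, le_rfl⟩]
    exact eval_nonneg_of_mem_Sbar hhom hone hpos hpos_infty
      (mem_Sbar_of_momMat_mem_Jset (fun i hi => hQ i ⟨hi.1, hi.2.trans p.le_succ⟩ x) hx hJ)
  have hstep : IsFace (Jset A Q p) (Jset A Q (p + 1)) := by
    rw [Jset_succ]
    exact hface.sep_eq_zero_of_nonneg_on_generators (isLinearMap_ip (Q (p + 1))).mk' hgen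
  exact ⟨hstep, hface.trans hstep⟩

theorem stmt14
    (n ω m : ℕ) (hn : 0 < n) (hω : 0 < ω) (hm : 0 < m)
    (A : Finset (Fin (n+1) →₀ ℕ)) (hA : A.Nonempty)
    (hAdeg : ∀ α ∈ A, ∑ i, α i = ω)
    (hAtop : Finsupp.single (0 : Fin (n+1)) ω ∈ A)
    (f : ℕ → MvPolynomial (Fin n) ℝ)
    (fb : ℕ → MvPolynomial (Fin (n+1)) ℝ)
    (hfdeg : ∀ i ≤ m, (f i).totalDegree ≤ 2 * ω)
    (hfbhom : ∀ i ≤ m, (fb i).IsHomogeneous (2 * ω))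
    (hfb1 : ∀ i ≤ m, ∀ w : Fin n → ℝ, eval (Fin.cons 1 w) (fb i) = eval w (f i))
    (Q : ℕ → Matrix A A ℝ)
    (hQsymm : ∀ i ≤ m, (Q i).IsSymm)
    (hQrep : ∀ i ≤ m, ∀ x : Fin (n+1) → ℝ, eval x (fb i) = ip (Q i) (momMat A x))
    (p : ℕ) (hp1 : 1 ≤ p) (hpm : p ≤ m)
    (hface : IsFace (CPPA A) (Jset A Q (p - 1)))
    (hpos1 : ∀ w ∈ Sset f (p - 1), 0 ≤ eval w (f p))
    (hpos2 : ∀ w ∈ Stilde fb (p - 1), 0 ≤ eval (Fin.cons 0 w) (fb p)) :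
    IsFace (Jset A Q (p - 1)) (Jset A Q p) ∧ IsFace (CPPA A) (Jset A Q p) := by
  obtain ⟨q, rfl⟩ := Nat.exists_eq_add_of_le' hp1
  exact stmt14_general (fun i hi => hfbhom i (hi.2.trans hpm)) (fun i hi => hfb1 i (hi.2.trans hpm))
    (fun i hi => hQrep i (hi.2.trans hpm)) hface hpos1 hpos2
end
end
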